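/- Let p be an odd prime, l a positive integer, q = p^l, and let F be the finite field with q elements (in Lean, GaloisField p l). Let ν ≥ 1 and r ≥ 0 be integers, let n′ be an odd positive integer not divisible by p, and set n = 2^ν·p^r·n′. Then there exists a monic polynomial h over F such that X^n + 1 = (C (h.coeff 0)⁻¹ * h.reverse) * h if and only if 2^{ν+1} does not divide p^l + 1. -/

import Mathlib

open Polynomial

/-!
Write `h*` for the monic reciprocal of `h`. A self-reciprocal polynomial has the form `h* * h`
exactly when each of its self-reciprocal irreducible factors has even multiplicity: the other
irreducible factors come in pairs `f*, f`. In odd characteristic `X ^ n + 1` is a power, with odd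
exponent, of a separable polynomial, so that it must have no self-reciprocal irreducible factor.
Over a field with `q` elements the conjugates of a root `a` of `f` are the `a ^ q ^ i`, so `f` is
self-reciprocal exactly when `a ^ (q ^ i + 1) = 1` for some `i`. If `n = 2 ^ ν * m` with `m` odd,
then `2 ^ (ν + 1)` divides the order of `a`, and hence `q ^ i + 1`, and hence `q + 1`. Conversely,
if `2 ^ (ν + 1) ∣ q + 1`, then every irreducible factor of `X ^ 2 ^ ν + 1` is self-reciprocal.
-/

section MonicReciprocal

variable {F : Type*} [Field F] {f h : F[X]}

theorem natDegree_reverse_of_coeff_zero_ne_zero {R : Type*} [Semiring R] {h : R[X]}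
    (h0 : h.coeff 0 ≠ 0) : h.reverse.natDegree = h.natDegree := by
  rw [reverse_natDegree, natTrailingDegree_eq_zero.2 (.inr h0), Nat.sub_zero]

theorem reverse_reverse_of_coeff_zero_ne_zero {R : Type*} [Semiring R] {h : R[X]}
    (h0 : h.coeff 0 ≠ 0) : h.reverse.reverse = h := by
  rw [reverse, natDegree_reverse_of_coeff_zero_ne_zero h0, reverse, reflect_reflect]

/-- The monic reciprocal polynomial `h* = h(0)⁻¹ X ^ (deg h) h(X⁻¹)`, as a multiplicative map.
It is `0` if `h(0) = 0`. -/
noncomputable def monicReciprocal : F[X] →* F[X] where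
  toFun h := C (h.coeff 0)⁻¹ * h.reverse
  map_one' := by simpa using reverse_C (1 : F)
  map_mul' f g := by
    simp only [reverse_mul_of_domain, mul_coeff_zero, mul_inv, C_mul]
    ring

theorem monicReciprocal_apply (h : F[X]) :
    monicReciprocal h = C (h.coeff 0)⁻¹ * h.reverse :=
  rfl

theorem coeff_zero_ne_zero_of_monicReciprocal_ne_zero (hh : monicReciprocal h ≠ 0) :
    h.coeff 0 ≠ 0 := by
  contrapose! hh
  simp [monicReciprocal_apply, hh]

theorem natDegree_monicReciprocal (h0 : h.coeff 0 ≠ 0) :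
    (monicReciprocal h).natDegree = h.natDegree := by
  rw [monicReciprocal_apply, natDegree_C_mul (inv_ne_zero h0),
    natDegree_reverse_of_coeff_zero_ne_zero h0]

theorem monic_monicReciprocal (h0 : h.coeff 0 ≠ 0) : (monicReciprocal h).Monic := by
  rw [Monic, monicReciprocal_apply, leadingCoeff_mul, leadingCoeff_C, reverse_leadingCoeff,
    trailingCoeff, natTrailingDegree_eq_zero.2 (.inr h0), inv_mul_cancel₀ h0]

theorem monic_of_monicReciprocal_eq_self (hh : h ≠ 0) (hself : monicReciprocal h = h) :
    h.Monic := by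
  have h0 := coeff_zero_ne_zero_of_monicReciprocal_ne_zero (hself.symm ▸ hh)
  exact hself ▸ monic_monicReciprocal h0

theorem monicReciprocal_monicReciprocal (hm : h.Monic) (h0 : h.coeff 0 ≠ 0) :
    monicReciprocal (monicReciprocal h) = h := by
  have hcoeff : (monicReciprocal h).coeff 0 = (h.coeff 0)⁻¹ := by
    simp [monicReciprocal_apply, hm.leadingCoeff]
  rw [monicReciprocal_apply, hcoeff, inv_inv, monicReciprocal_apply, reverse_mul_of_domain,
    reverse_C, reverse_reverse_of_coeff_zero_ne_zero h0, ← mul_assoc, ← C_mul,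
    mul_inv_cancel₀ h0, C_1, one_mul]

theorem monicReciprocal_X_pow_add_one {n : ℕ} (hn : n ≠ 0) :
    monicReciprocal (X ^ n + 1 : F[X]) = X ^ n + 1 := by
  have hX : (X ^ n : F[X]).reverse = 1 := by
    simpa using (reverse_mul_X_pow (C 1 : F[X]) n).trans (reverse_C 1)
  have hrev : (X ^ n + 1 : F[X]).reverse = X ^ n + 1 := by
    rw [← C_1, reverse_add_C, hX, natDegree_X_pow, C_1, one_mul, add_comm]
  simp [monicReciprocal_apply, hrev, hn.symm]

theorem aeval_inv_monicReciprocal {K : Type*} [Field K] [Algebra F K] {a : K} (ha : a ≠ 0)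
    (haf : aeval a f = 0) : aeval a⁻¹ (monicReciprocal f) = 0 := by
  have := invertibleOfNonzero ha
  have hrev : aeval a⁻¹ f.reverse = 0 := by
    simpa [aeval_def] using (eval₂_reverse_eq_zero_iff (algebraMap F K) a f).2 haf
  rw [monicReciprocal_apply, map_mul, hrev, mul_zero]

theorem monicReciprocal_minpoly {K : Type*} [Field K] [Algebra F K] {a : K} (hint : IsIntegral F a)
    (ha : a ≠ 0) : monicReciprocal (minpoly F a) = minpoly F a⁻¹ := by
  have hdvd {b : K} (hb : b ≠ 0) : minpoly F b⁻¹ ∣ monicReciprocal (minpoly F b) :=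
    minpoly.dvd F _ (aeval_inv_monicReciprocal hb (minpoly.aeval F b))
  have h0 := minpoly.coeff_zero_ne_zero hint ha
  have h0_inv := minpoly.coeff_zero_ne_zero hint.inv (inv_ne_zero ha)
  refine eq_of_monic_of_dvd_of_natDegree_le (minpoly.monic hint.inv) (monic_monicReciprocal h0)
    (hdvd ha) ?_
  calc (monicReciprocal (minpoly F a)).natDegree
      = (minpoly F a).natDegree := natDegree_monicReciprocal h0
    _ ≤ (monicReciprocal (minpoly F a⁻¹)).natDegree :=
        natDegree_le_of_dvd (by simpa using hdvd (inv_ne_zero ha))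
          (monic_monicReciprocal h0_inv).ne_zero
    _ = (minpoly F a⁻¹).natDegree := natDegree_monicReciprocal h0_inv

end MonicReciprocal

section Factorization

variable {F : Type*} [Field F] {f h P : F[X]}

theorem multiplicity_monicReciprocal (hf : monicReciprocal f = f) (hm : h.Monic)
    (h0 : h.coeff 0 ≠ 0) : multiplicity f (monicReciprocal h) = multiplicity f h := by
  refine multiplicity_eq_of_emultiplicity_eq (emultiplicity_eq_emultiplicity_iff.2 fun k => ?_)
  have hfk : monicReciprocal (f ^ k) = f ^ k := by rw [map_pow, hf]
  refine ⟨fun hdvd => ?_, fun hdvd => ?_⟩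
  · simpa [hfk, monicReciprocal_monicReciprocal hm h0] using map_dvd monicReciprocal hdvd
  · simpa [hfk] using map_dvd monicReciprocal hdvd

theorem even_multiplicity_monicReciprocal_mul (hf : Irreducible f) (hself : monicReciprocal f = f)
    (hm : h.Monic) (h0 : h.coeff 0 ≠ 0) : Even (multiplicity f (monicReciprocal h * h)) := by
  have hfin : FiniteMultiplicity f (monicReciprocal h * h) :=
    .of_prime_left hf.prime ((monic_monicReciprocal h0).mul hm).ne_zero
  rw [multiplicity_mul hf.prime hfin, multiplicity_monicReciprocal hself hm h0]
  exact ⟨_, rfl⟩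

theorem monicReciprocal_mul_self_dvd (hf : Irreducible f) (hfm : f.Monic) (h0 : f.coeff 0 ≠ 0)
    (hP : monicReciprocal P = P) (hdvd : f ∣ P)
    (heven : monicReciprocal f = f → Even (multiplicity f P)) : monicReciprocal f * f ∣ P := by
  by_cases hself : monicReciprocal f = f
  · have hpos : multiplicity f P ≠ 0 := by simpa [multiplicity_eq_zero] using hdvd
    obtain ⟨k, hk⟩ := heven hself
    rw [hself, ← sq]
    exact pow_dvd_of_le_multiplicity (by omega)
  · have hcop : IsCoprime f (monicReciprocal f) := by
      refine hf.coprime_iff_not_dvd.2 fun hff => hself ?_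
      exact eq_of_monic_of_dvd_of_natDegree_le hfm (monic_monicReciprocal h0) hff
        (natDegree_monicReciprocal h0).le
    have hdvd' : monicReciprocal f ∣ P := by simpa [hP] using map_dvd monicReciprocal hdvd
    exact hcop.symm.mul_dvd hdvd' hdvd

theorem exists_eq_monicReciprocal_mul (hP : P ≠ 0) (hself : monicReciprocal P = P)
    (heven : ∀ f : F[X], Irreducible f → monicReciprocal f = f → Even (multiplicity f P)) :
    ∃ h : F[X], h.Monic ∧ P = monicReciprocal h * h := by
  induction hd : P.natDegree using Nat.strong_induction_on generalizing P with
  | _ d ih =>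
  have hP0 : P.coeff 0 ≠ 0 := coeff_zero_ne_zero_of_monicReciprocal_ne_zero (hself.symm ▸ hP)
  have hPm : P.Monic := monic_of_monicReciprocal_eq_self hP hself
  by_cases hu : IsUnit P
  · exact ⟨1, monic_one, by rw [map_one, mul_one, hPm.eq_one_of_isUnit hu]⟩
  obtain ⟨f, hfm, hf, hfP⟩ := exists_monic_irreducible_factor P hu
  have hf0 : f.coeff 0 ≠ 0 := ne_zero_of_dvd_ne_zero hP0 (map_dvd constantCoeff hfP)
  obtain ⟨Q, rfl⟩ := monicReciprocal_mul_self_dvd hf hfm hf0 hself hfP (heven f hf)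
  have hffm : (monicReciprocal f * f).Monic := (monic_monicReciprocal hf0).mul hfm
  have hQself : monicReciprocal Q = Q := by
    rw [map_mul, map_mul, monicReciprocal_monicReciprocal hfm hf0, mul_comm f] at hself
    exact mul_left_cancel₀ hffm.ne_zero hself
  have hQdeg : Q.natDegree < d := by
    rw [← hd, hffm.natDegree_mul' (right_ne_zero_of_mul hP),
      (monic_monicReciprocal hf0).natDegree_mul hfm]
    have := hf.natDegree_pos
    omega
  have hQeven (g : F[X]) (hg : Irreducible g) (hgself : monicReciprocal g = g) :
      Even (multiplicity g Q) := by
    have hgP := heven g hg hgself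
    rwa [multiplicity_mul hg.prime (.of_prime_left hg.prime hP), Nat.even_add,
      iff_true_left (even_multiplicity_monicReciprocal_mul hg hgself hfm hf0)] at hgP
  obtain ⟨h, hm, hQ⟩ := ih _ hQdeg (right_ne_zero_of_mul hP) hQself hQeven rfl
  refine ⟨f * h, hfm.mul hm, ?_⟩
  rw [map_mul, mul_mul_mul_comm, ← hQ]

theorem exists_eq_monicReciprocal_mul_iff (hP : P ≠ 0) (hself : monicReciprocal P = P) :
    (∃ h : F[X], h.Monic ∧ P = monicReciprocal h * h) ↔
      ∀ f : F[X], Irreducible f → monicReciprocal f = f → Even (multiplicity f P) := by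
  refine ⟨?_, exists_eq_monicReciprocal_mul hP hself⟩
  rintro ⟨h, hm, rfl⟩ f hf hfself
  exact even_multiplicity_monicReciprocal_mul hf hfself hm
    (coeff_zero_ne_zero_of_monicReciprocal_ne_zero (left_ne_zero_of_mul hP))

end Factorization

section XPowAddOne

theorem multiplicity_X_pow_expChar_pow_mul_add_one {F : Type*} [Field F] (p : ℕ) [ExpChar F p]
    {f : F[X]} (hf : Irreducible f) (r : ℕ) {m : ℕ} (hm : (m : F) ≠ 0)
    (hdvd : f ∣ X ^ (p ^ r * m) + 1) : multiplicity f (X ^ (p ^ r * m) + 1) = p ^ r := by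
  have hpow : (X ^ (p ^ r * m) + 1 : F[X]) = (X ^ m + 1) ^ p ^ r := by
    rw [add_pow_expChar_pow, one_pow, mul_comm, pow_mul]
  have hsep : (X ^ m + 1 : F[X]).Separable := by
    simpa using separable_X_pow_sub_C (-1 : F) hm (neg_ne_zero.2 one_ne_zero)
  have hfin : FiniteMultiplicity f (X ^ m + 1) := .of_prime_left hf.prime hsep.ne_zero
  have hone : multiplicity f (X ^ m + 1) = 1 := by
    refine hfin.multiplicity_eq_iff.2 ⟨?_, fun hsq => hf.not_isUnit ?_⟩
    · rw [hpow] at hdvd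
      simpa using hf.prime.dvd_of_dvd_pow hdvd
    · exact hsep.squarefree f (by simpa [sq] using hsq)
  rw [hpow, hfin.multiplicity_pow hf.prime, hone, mul_one]

theorem exists_eq_expChar_pow_mul (F : Type*) [Field F] (p : ℕ) [hp : ExpChar F p] {n : ℕ}
    (hn : n ≠ 0) : ∃ r m : ℕ, n = p ^ r * m ∧ (m : F) ≠ 0 := by
  cases hp with
  | zero => exact ⟨0, n, by simp, Nat.cast_ne_zero.2 hn⟩
  | prime hp =>
    obtain ⟨r, m, hpm, rfl⟩ := Nat.exists_eq_pow_mul_and_not_dvd hn p hp.ne_one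
    exact ⟨r, m, rfl, mt (CharP.cast_eq_zero_iff F p m).1 hpm⟩

theorem odd_multiplicity_X_pow_add_one {F : Type*} [Field F] (hF : ringChar F ≠ 2) {f : F[X]}
    (hf : Irreducible f) {n : ℕ} (hn : n ≠ 0) (hdvd : f ∣ X ^ n + 1) :
    Odd (multiplicity f (X ^ n + 1)) := by
  obtain ⟨p, hp⟩ := ExpChar.exists F
  have hp_odd : Odd p := by
    cases hp with
    | zero => exact odd_one
    | prime hp => exact hp.odd_of_ne_two (ringChar.eq F p ▸ hF)
  obtain ⟨r, m, rfl, hm⟩ := exists_eq_expChar_pow_mul F p hn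
  rw [multiplicity_X_pow_expChar_pow_mul_add_one p hf r hm hdvd]
  exact hp_odd.pow

theorem exists_X_pow_add_one_eq_monicReciprocal_mul_iff {F : Type*} [Field F]
    (hF : ringChar F ≠ 2) {n : ℕ} (hn : n ≠ 0) :
    (∃ h : F[X], h.Monic ∧ X ^ n + 1 = monicReciprocal h * h) ↔
      ¬∃ f : F[X], Irreducible f ∧ f ∣ X ^ n + 1 ∧ monicReciprocal f = f := by
  have hne : (X ^ n + 1 : F[X]) ≠ 0 := (monic_X_pow_add_C 1 hn).ne_zero
  rw [exists_eq_monicReciprocal_mul_iff hne (monicReciprocal_X_pow_add_one hn)]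
  push Not
  refine forall₂_congr fun f hf => ⟨fun h hdvd hself => ?_, fun h hself => ?_⟩
  · exact Nat.not_even_iff_odd.2 (odd_multiplicity_X_pow_add_one hF hf hn hdvd) (h hself)
  · rw [multiplicity_eq_zero.2 fun hdvd => h hdvd hself]
    exact Even.zero

theorem adjoinRoot_root_pow_eq_neg_one_iff {R : Type*} [CommRing R] {f : R[X]} {n : ℕ} :
    AdjoinRoot.root f ^ n = -1 ↔ f ∣ X ^ n + 1 := by
  rw [← AdjoinRoot.mk_eq_zero, eq_neg_iff_add_eq_zero]
  simp

end XPowAddOne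

section FiniteField

variable {F : Type*} [Field F] [Finite F]

theorem isConjRoot_iff_exists_pow_card_pow {K : Type*} [Field K] [Finite K] [Algebra F K]
    {a b : K} : IsConjRoot F a b ↔ ∃ i : ℕ, b = a ^ Nat.card F ^ i := by
  have := Fintype.ofFinite F
  have hfrob (i : ℕ) : (FiniteField.frobeniusAlgEquivOfAlgebraic F K ^ i) a =
      a ^ Nat.card F ^ i := by
    rw [AlgEquiv.coe_pow, FiniteField.coe_frobeniusAlgEquivOfAlgebraic_iterate,
      Nat.card_eq_fintype_card]
  refine ⟨fun hab => ?_, ?_⟩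
  · obtain ⟨σ, rfl⟩ := hab.symm.exists_algEquiv
    obtain ⟨i, rfl⟩ := (FiniteField.bijective_frobeniusAlgEquivOfAlgebraic_pow F K).2 σ
    exact ⟨i, hfrob i⟩
  · rintro ⟨i, rfl⟩
    exact hfrob i ▸ isConjRoot_of_algEquiv a _

theorem monicReciprocal_eq_self_iff {f : F[X]} (hf : Irreducible f) (hm : f.Monic)
    (h0 : f.coeff 0 ≠ 0) :
    monicReciprocal f = f ↔ ∃ i : ℕ, AdjoinRoot.root f ^ (Nat.card F ^ i + 1) = 1 := by
  have := Fact.mk hf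
  have : Module.Finite F (AdjoinRoot f) := hm.finite_adjoinRoot
  have : Finite (AdjoinRoot f) := Module.finite_of_finite F
  have hmin : minpoly F (AdjoinRoot.root f) = f := by
    simp [AdjoinRoot.minpoly_root hf.ne_zero, hm.leadingCoeff]
  have ha : AdjoinRoot.root f ≠ 0 := by
    intro ha
    have haf : aeval (AdjoinRoot.root f) f = 0 := by simp
    rw [ha, ← coeff_zero_eq_aeval_zero', map_eq_zero] at haf
    exact h0 haf
  calc monicReciprocal f = f
      ↔ IsConjRoot F (AdjoinRoot.root f) (AdjoinRoot.root f)⁻¹ := by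
        rw [isConjRoot_def, ← monicReciprocal_minpoly (.of_finite F _) ha, hmin, eq_comm]
    _ ↔ ∃ i : ℕ, (AdjoinRoot.root f)⁻¹ = AdjoinRoot.root f ^ Nat.card F ^ i :=
        isConjRoot_iff_exists_pow_card_pow
    _ ↔ ∃ i : ℕ, AdjoinRoot.root f ^ (Nat.card F ^ i + 1) = 1 := by
        simp only [pow_succ, eq_comm (a := (AdjoinRoot.root f)⁻¹), ← mul_eq_one_iff_eq_inv₀ ha]

end FiniteField

section TwoPower

theorem two_pow_dvd_add_one_of_dvd_pow_add_one {q i k : ℕ} (hq : Odd q)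
    (hdvd : 2 ^ k ∣ q ^ i + 1) : 2 ^ k ∣ q + 1 := by
  zify at hdvd ⊢
  have hq' : Odd (q : ℤ) := mod_cast hq
  rcases Nat.even_or_odd' i with ⟨j, rfl | rfl⟩
  · have hmod : ((q : ℤ) ^ (2 * j)) % 4 = 1 := by
      rw [mul_comm, pow_mul]
      exact Int.sq_mod_four_eq_one_of_odd hq'.pow
    have hk : k ≤ 1 := by
      by_contra! hk
      have h4 : (2 : ℤ) ^ 2 ∣ q ^ (2 * j) + 1 := (pow_dvd_pow 2 hk).trans hdvd
      omega
    exact (pow_dvd_pow 2 hk).trans (by simpa using hq'.add_one.two_dvd)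
  · have hval := emultiplicity_pow_sub_pow_of_prime (n := 2 * j + 1) Int.prime_two
      (x := (q : ℤ)) (y := -1) (by simpa using hq'.add_one.two_dvd)
      (Int.two_dvd_ne_zero.2 (Int.odd_iff.1 hq')) (by omega)
    rw [(odd_two_mul_add_one j).neg_one_pow, sub_neg_eq_add, sub_neg_eq_add] at hval
    rwa [pow_dvd_iff_le_emultiplicity, hval, ← pow_dvd_iff_le_emultiplicity] at hdvd

theorem two_pow_succ_dvd_of_pow_eq_neg_one {M : Type*} [Monoid M] [HasDistribNeg M]
    (hne : (-1 : M) ≠ 1) {a : M} {k m n : ℕ} (hneg : a ^ (2 ^ k * m) = -1) (hone : a ^ n = 1) :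
    2 ^ (k + 1) ∣ n := by
  have horder : orderOf (a ^ m) = 2 ^ (k + 1) := by
    refine orderOf_eq_prime_pow ?_ ?_
    · rwa [← pow_mul, mul_comm, hneg]
    · rw [← pow_mul, mul_comm, pow_succ, mul_right_comm, pow_mul, hneg, neg_one_sq]
  rw [← horder]
  exact orderOf_dvd_of_pow_eq_one (by rw [pow_right_comm, hone, one_pow])

end TwoPower

section SelfDual

variable {F : Type*} [Field F] [Finite F]

theorem two_pow_succ_dvd_card_add_one_of_monicReciprocal_eq_self (hF : ringChar F ≠ 2)
    {ν m : ℕ} {f : F[X]} (hf : Irreducible f) (hdvd : f ∣ X ^ (2 ^ ν * m) + 1)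
    (hself : monicReciprocal f = f) : 2 ^ (ν + 1) ∣ Nat.card F + 1 := by
  have := Fintype.ofFinite F
  have := Fact.mk hf
  have hcard : Odd (Nat.card F) := by
    rw [Nat.card_eq_fintype_card, Nat.odd_iff]
    exact FiniteField.odd_card_of_char_ne_two hF
  have hne : (-1 : AdjoinRoot f) ≠ 1 := fun h =>
    Ring.neg_one_ne_one_of_char_ne_two hF ((AdjoinRoot.of f).injective (by simpa using h))
  have h0 : f.coeff 0 ≠ 0 :=
    coeff_zero_ne_zero_of_monicReciprocal_ne_zero (hself.symm ▸ hf.ne_zero)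
  have hm : f.Monic := monic_of_monicReciprocal_eq_self hf.ne_zero hself
  obtain ⟨i, hi⟩ := (monicReciprocal_eq_self_iff hf hm h0).1 hself
  exact two_pow_dvd_add_one_of_dvd_pow_add_one hcard
    (two_pow_succ_dvd_of_pow_eq_neg_one hne (adjoinRoot_root_pow_eq_neg_one_iff.2 hdvd) hi)

theorem monicReciprocal_eq_self_of_dvd_X_pow_two_pow_add_one {ν : ℕ}
    (hcard : 2 ^ (ν + 1) ∣ Nat.card F + 1) {f : F[X]} (hf : Irreducible f) (hm : f.Monic)
    (hdvd : f ∣ X ^ 2 ^ ν + 1) : monicReciprocal f = f := by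
  have hn : 0 ≠ 2 ^ ν := (pow_ne_zero ν two_ne_zero).symm
  have h0 : f.coeff 0 ≠ 0 :=
    ne_zero_of_dvd_ne_zero (by simp [coeff_X_pow, hn]) (map_dvd constantCoeff hdvd)
  have hone : AdjoinRoot.root f ^ 2 ^ (ν + 1) = 1 := by
    rw [pow_succ, pow_mul, adjoinRoot_root_pow_eq_neg_one_iff.2 hdvd, neg_one_sq]
  refine (monicReciprocal_eq_self_iff hf hm h0).2 ⟨1, ?_⟩
  rw [pow_one]
  exact orderOf_dvd_iff_pow_eq_one.1 ((orderOf_dvd_of_pow_eq_one hone).trans hcard)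

theorem exists_irreducible_dvd_and_monicReciprocal_eq_self_iff (hF : ringChar F ≠ 2) (ν : ℕ)
    {m : ℕ} (hm : Odd m) :
    (∃ f : F[X], Irreducible f ∧ f ∣ X ^ (2 ^ ν * m) + 1 ∧ monicReciprocal f = f) ↔
      2 ^ (ν + 1) ∣ Nat.card F + 1 := by
  refine ⟨?_, fun hcard => ?_⟩
  · rintro ⟨f, hf, hdvd, hself⟩
    exact two_pow_succ_dvd_card_add_one_of_monicReciprocal_eq_self hF hf hdvd hself
  · have hdvd : (X ^ 2 ^ ν + 1 : F[X]) ∣ X ^ (2 ^ ν * m) + 1 := by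
      simpa [pow_mul] using hm.add_dvd_pow_add_pow (X ^ 2 ^ ν : F[X]) 1
    have hdeg : (X ^ 2 ^ ν + 1 : F[X]).natDegree ≠ 0 := by
      simpa using (natDegree_X_pow_add_C (n := 2 ^ ν) (r := (1 : F))).trans_ne (by positivity)
    obtain ⟨f, hfm, hf, hfdvd⟩ := exists_monic_irreducible_factor (X ^ 2 ^ ν + 1 : F[X])
      fun hu => hdeg (natDegree_eq_zero_of_isUnit hu)
    exact ⟨f, hf, hfdvd.trans hdvd,
      monicReciprocal_eq_self_of_dvd_X_pow_two_pow_add_one hcard hf hfm hfdvd⟩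

theorem euclidean_selfDual_negacyclic_exists_iff_general (hF : ringChar F ≠ 2) (ν : ℕ) {m : ℕ}
    (hm : Odd m) :
    (∃ h : F[X], h.Monic ∧ X ^ (2 ^ ν * m) + 1 = monicReciprocal h * h) ↔
      ¬ 2 ^ (ν + 1) ∣ Nat.card F + 1 := by
  have hn : 2 ^ ν * m ≠ 0 := mul_ne_zero (by positivity) hm.pos.ne'
  rw [exists_X_pow_add_one_eq_monicReciprocal_mul_iff hF hn,
    exists_irreducible_dvd_and_monicReciprocal_eq_self_iff hF ν hm]

end SelfDual

/-- Let `p` be an odd prime, `F` the field with `p^l` elements, `ν ≥ 1`, `r ≥ 0`,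
`n′` odd with `p ∤ n′`, and `n = 2^ν·p^r·n′`. A Euclidean self-dual negacyclic code of
length `n` over `F` exists (i.e. `X^n + 1 = h*·h` for some monic `h`) if and only if
`2^(ν+1) ∤ p^l + 1`. -/
theorem euclidean_selfDual_negacyclic_exists_iff
    (p : ℕ) [hp : Fact p.Prime] (hodd : Odd p) (l : ℕ) (hl : 0 < l)
    (ν r n' : ℕ) (hν : 1 ≤ ν) (hn' : 0 < n') (hn'o : Odd n') (hpn' : ¬ p ∣ n') :
    (∃ h : Polynomial (GaloisField p l), h.Monic ∧
        (X : Polynomial (GaloisField p l)) ^ (2 ^ ν * p ^ r * n') + 1 =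
          (Polynomial.C (h.coeff 0)⁻¹ * h.reverse) * h) ↔
      ¬ 2 ^ (ν + 1) ∣ p ^ l + 1 := by
  have hchar : ringChar (GaloisField p l) ≠ 2 := by
    rw [ringChar.eq _ p]
    exact hodd.ne_two_of_dvd_nat dvd_rfl
  rw [mul_assoc, ← GaloisField.card p l hl.ne']
  exact euclidean_selfDual_negacyclic_exists_iff_general hchar ν (hodd.pow.mul hn'o)
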